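/- (Multiparameter Birkhoff theorem, continuous case.) Let (S, 𝓑, μ) be a probability space and let {φ_t}_{t∈ℝ^d} be a measure-preserving ℝ^d-action on (S,μ) with (s,t) ↦ φ_t(s) jointly measurable. Let f₀ ∈ L¹(S,μ) and let 𝓘 denote the σ-algebra of all measurable sets A with φ_t^{-1}(A) = A for all t ∈ ℝ^d. Then the averages A_T f := (2T)^{-d} ∫_{(−T,T]^d} f₀(φ_t(·)) dt converge to the conditional expectation E_μ[f₀ | 𝓘] both μ-almost everywhere and in L¹(S,μ), as T → ∞. -/

import Mathlib

open MeasureTheory Filter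


set_option linter.unusedSectionVars false
namespace Birk
open Metric

structure Act {S : Type*} [MeasurableSpace S] {d : ℕ} (μ : Measure S)
    (φ : (Fin d → ℝ) → S → S) : Prop where
  joint : Measurable fun p : (Fin d → ℝ) × S => φ p.1 p.2
  id0 : ∀ s, φ 0 s = s
  comp : ∀ u v s, φ (u + v) s = φ u (φ v s)
  pres : ∀ t, ∀ A : Set S, MeasurableSet A → μ (φ t ⁻¹' A) = μ A

noncomputable def avg {S : Type*} {d : ℕ} (φ : (Fin d → ℝ) → S → S) (f : S → ℝ) (T : ℝ) (s : S) : ℝ :=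
  ((2 * T) ^ d)⁻¹ * ∫ t in closedBall (0 : Fin d → ℝ) T, f (φ t s)

lemma vol_ball {d : ℕ} (a : Fin d → ℝ) {r : ℝ} (hr : 0 ≤ r) :
    volume (closedBall a r) = ENNReal.ofReal ((2 * r) ^ d) := by
  rw [Real.volume_pi_closedBall a hr, Fintype.card_fin]

lemma avg_eq {S : Type*} {d : ℕ} (φ : (Fin d → ℝ) → S → S) (f : S → ℝ) {T : ℝ} (hT : 0 ≤ T) (s : S) :
    ((2 * T) ^ d)⁻¹ * ∫ t in Set.univ.pi fun _ : Fin d => Set.Ioc (-T) T, f (φ t s) = avg φ f T s := by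
  unfold avg
  congr 1
  apply setIntegral_congr_set
  have h := Measure.univ_pi_Ioc_ae_eq_Icc (μ := fun _ : Fin d => (volume : Measure ℝ))
    (f := fun _ => -T) (g := fun _ => T)
  rw [volume_pi]
  refine h.trans (Eq.eventuallyEq ?_)
  rw [closedBall_pi _ hT, ← Set.pi_univ_Icc]
  simp [Real.closedBall_eq_Icc]
  rfl

variable {S : Type*} [MeasurableSpace S] {μ : Measure S} [IsProbabilityMeasure μ] {d : ℕ}
  {φ : (Fin d → ℝ) → S → S}

lemma Act.meas (h : Act μ φ) (t) : Measurable (φ t) := h.joint.comp measurable_prodMk_left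

lemma Act.mp (h : Act μ φ) (t) : MeasurePreserving (φ t) μ μ :=
  ⟨h.meas t, Measure.ext fun A hA => by rw [Measure.map_apply (h.meas t) hA, h.pres t A hA]⟩

lemma Act.skew (h : Act μ φ) (ν : Measure (Fin d → ℝ)) [SFinite ν] :
    MeasurePreserving (fun p : (Fin d → ℝ) × S => (p.1, φ p.1 p.2)) (ν.prod μ) (ν.prod μ) :=
  MeasurePreserving.skew_product (MeasurePreserving.id _) h.joint (ae_of_all _ fun t => (h.mp t).map_eq)

lemma Act.ae_ae (h : Act μ φ) {p : S → Prop} (hp : ∀ᵐ s ∂μ, p s) :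
    ∀ᵐ s ∂μ, ∀ᵐ t : Fin d → ℝ, p (φ t s) := by
  have h1 : ∀ᵐ z ∂((volume : Measure (Fin d → ℝ)).prod μ), p z.2 :=
    Measure.quasiMeasurePreserving_snd.ae hp
  have h2 := (h.skew volume).quasiMeasurePreserving.ae h1
  have h3 := (Measure.measurePreserving_swap (μ := μ) (ν := (volume : Measure (Fin d → ℝ)))).quasiMeasurePreserving.ae h2
  exact Measure.ae_ae_of_ae_prod h3

lemma Act.avg_congr (h : Act μ φ) {f g : S → ℝ} (hfg : f =ᵐ[μ] g) :
    ∀ᵐ s ∂μ, ∀ T, avg φ f T s = avg φ g T s := by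
  filter_upwards [h.ae_ae hfg] with s hs T
  unfold avg
  congr 1
  exact integral_congr_ae (ae_restrict_of_ae hs)

lemma Act.int_prod (h : Act μ φ) {f : S → ℝ} (hf : Integrable f μ) (T : ℝ) :
    Integrable (fun p : (Fin d → ℝ) × S => f (φ p.1 p.2)) ((volume.restrict (closedBall 0 T)).prod μ) := by
  have : IsFiniteMeasure ((volume : Measure (Fin d → ℝ)).restrict (closedBall 0 T)) :=
    ⟨by simpa using (isCompact_closedBall (0 : Fin d → ℝ) T).measure_lt_top⟩
  have h1 := hf.comp_snd ((volume : Measure (Fin d → ℝ)).restrict (closedBall 0 T))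
  exact (h.skew _).integrable_comp_of_integrable h1

lemma Act.ae_int (h : Act μ φ) {f : S → ℝ} (hf : Integrable f μ) :
    ∀ᵐ s ∂μ, ∀ T, IntegrableOn (fun t => f (φ t s)) (closedBall 0 T) := by
  have : ∀ n : ℕ, ∀ᵐ s ∂μ, IntegrableOn (fun t => f (φ t s)) (closedBall 0 n) :=
    fun n => (h.int_prod hf n).prod_left_ae
  filter_upwards [ae_all_iff.2 this] with s hs T
  obtain ⟨n, hn⟩ := exists_nat_ge T
  exact (hs n).mono_set (closedBall_subset_closedBall hn)

lemma vitali_cover (D : Set (Fin d → ℝ)) (r : (Fin d → ℝ) → ℝ) (N R : ℝ)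
    (hr0 : ∀ u ∈ D, 0 < r u) (hrN : ∀ u ∈ D, r u ≤ N) (F : (Fin d → ℝ) → ENNReal) (lam : ENNReal)
    (h : ∀ u ∈ D, lam * volume (closedBall u (r u)) ≤ ∫⁻ t in closedBall u (r u), F t)
    (hD : D ⊆ closedBall 0 R) :
    lam * volume D ≤ 5 ^ d * ∫⁻ t in closedBall 0 (R + N), F t := by
  obtain ⟨w, hwD, hdisj, hcov⟩ := Vitali.exists_disjoint_subfamily_covering_enlargement_closedBall
    D (fun u => u) r N hrN 5 (by norm_num)
  have hwc : w.Countable := hdisj.countable_of_nonempty_interior fun u hu =>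
    ⟨u, ball_subset_interior_closedBall (mem_ball_self (hr0 u (hwD hu)))⟩
  have hsub : D ⊆ ⋃ u ∈ w, closedBall u (5 * r u) := by
    intro u hu
    obtain ⟨b, hb, hbb⟩ := hcov u hu
    exact Set.mem_biUnion hb (hbb (mem_closedBall_self (hr0 u hu).le))
  have : Countable w := hwc
  calc lam * volume D ≤ lam * ∑' u : w, volume (closedBall (u : Fin d → ℝ) (5 * r u)) := by
        gcongr
        exact (measure_mono hsub).trans (measure_biUnion_le _ hwc _)
    _ = 5 ^ d * ∑' u : w, lam * volume (closedBall (u : Fin d → ℝ) (r u)) := by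
        rw [← ENNReal.tsum_mul_left, ← ENNReal.tsum_mul_left]
        congr 1; ext u
        have := (hr0 u (hwD u.2)).le
        rw [vol_ball _ (by positivity), vol_ball _ this,
          show (2 * (5 * r u)) ^ d = 5 ^ d * (2 * r u) ^ d by rw [← mul_pow]; ring,
          ENNReal.ofReal_mul (by positivity), ENNReal.ofReal_pow (by norm_num)]
        simp only [ENNReal.ofReal_ofNat]
        ring
    _ ≤ 5 ^ d * ∑' u : w, ∫⁻ t in closedBall (u : Fin d → ℝ) (r u), F t := by
        gcongr with u
        exact h u (hwD u.2)
    _ = 5 ^ d * ∫⁻ t in ⋃ u ∈ w, closedBall (u : Fin d → ℝ) (r u), F t := by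
        rw [lintegral_biUnion hwc (fun u _ => measurableSet_closedBall) hdisj]
    _ ≤ 5 ^ d * ∫⁻ t in closedBall 0 (R + N), F t := by
        gcongr
        refine Set.iUnion₂_subset fun u hu => closedBall_subset_closedBall' ?_
        have := hD (hwD hu)
        have h2 := hrN u (hwD hu)
        rw [mem_closedBall] at this
        linarith

lemma ball_shift (F : (Fin d → ℝ) → ENNReal) (u : Fin d → ℝ) (r : ℝ) :
    ∫⁻ t in closedBall u r, F t = ∫⁻ t in closedBall 0 r, F (t + u) := by
  rw [← lintegral_indicator measurableSet_closedBall, ← lintegral_indicator measurableSet_closedBall,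
    ← lintegral_add_right_eq_self _ u]
  congr 1; ext t
  simp [Set.indicator, dist_eq_norm]

lemma ball_shift' (F : (Fin d → ℝ) → ℝ) (u : Fin d → ℝ) (r : ℝ) :
    ∫ t in closedBall u r, F t = ∫ t in closedBall 0 r, F (t + u) := by
  rw [← integral_indicator measurableSet_closedBall, ← integral_indicator measurableSet_closedBall,
    ← integral_add_right_eq_self _ u]
  congr 1; ext t
  simp [Set.indicator, dist_eq_norm]

lemma Act.maximal_fin (h : Act μ φ) {f : S → ENNReal} (hf : Measurable f) (lam : ENNReal) (N : ℕ)
    (hN : 0 < N) :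
    lam * μ {s | ∃ n : ℕ, 0 < n ∧ n ≤ N ∧ lam * volume (closedBall (0 : Fin d → ℝ) n) ≤
      ∫⁻ t in closedBall (0 : Fin d → ℝ) n, f (φ t s)} ≤ 10 ^ d * ∫⁻ s, f s ∂μ := by
  set E := {s | ∃ n : ℕ, 0 < n ∧ n ≤ N ∧ lam * volume (closedBall (0 : Fin d → ℝ) n) ≤
      ∫⁻ t in closedBall (0 : Fin d → ℝ) n, f (φ t s)} with hEdef
  have hfj : Measurable (fun p : (Fin d → ℝ) × S => f (φ p.1 p.2)) := hf.comp h.joint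
  have hE : MeasurableSet E := by
    have : E = ⋃ n : ℕ, {s | 0 < n ∧ n ≤ N ∧ lam * volume (closedBall (0 : Fin d → ℝ) n) ≤
      ∫⁻ t in closedBall (0 : Fin d → ℝ) n, f (φ t s)} := by ext; simp [hEdef]
    rw [this]
    refine MeasurableSet.iUnion fun n => ?_
    refine (MeasurableSet.const _).inter ((MeasurableSet.const _).inter ?_)
    exact measurableSet_le measurable_const (hfj.lintegral_prod_left')
  have key : ∀ s, lam * volume {u | u ∈ closedBall (0 : Fin d → ℝ) N ∧ φ u s ∈ E} ≤
      5 ^ d * ∫⁻ t in closedBall 0 ((N : ℝ) + N), f (φ t s) := by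
    intro s
    have hex : ∀ u : Fin d → ℝ, ∃ n : ℕ, φ u s ∈ E → (0 < n ∧ n ≤ N ∧
        lam * volume (closedBall (0 : Fin d → ℝ) n) ≤
        ∫⁻ t in closedBall (0 : Fin d → ℝ) n, f (φ t (φ u s))) := by
      intro u
      by_cases hu : φ u s ∈ E
      · obtain ⟨n, hn⟩ := hu
        exact ⟨n, fun _ => hn⟩
      · exact ⟨0, fun h => absurd h hu⟩
    choose r hr using hex
    apply vitali_cover _ (fun u => (r u : ℝ))
    · rintro u ⟨_, hu⟩; exact_mod_cast (hr u hu).1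
    · rintro u ⟨_, hu⟩; exact_mod_cast (hr u hu).2.1
    · rintro u ⟨_, hu⟩
      rw [ball_shift]
      simp only [h.comp]
      refine le_trans (le_of_eq ?_) (hr u hu).2.2
      rw [vol_ball _ (by positivity), vol_ball _ (by positivity)]
    · exact fun u hu => hu.1
  have hmeas2 : MeasurableSet ((fun p : (Fin d → ℝ) × S => φ p.1 p.2) ⁻¹' E) := h.joint hE
  have h1 : ∫⁻ s, volume {u | u ∈ closedBall (0 : Fin d → ℝ) N ∧ φ u s ∈ E} ∂μ =
      volume (closedBall (0 : Fin d → ℝ) N) * μ E := by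
    have e1 : ∀ s, volume {u | u ∈ closedBall (0 : Fin d → ℝ) N ∧ φ u s ∈ E} =
        ∫⁻ u in closedBall (0 : Fin d → ℝ) N, E.indicator 1 (φ u s) := by
      intro s
      have hm : MeasurableSet {u | φ u s ∈ E} := measurable_prodMk_right hmeas2
      have e2 : (fun u => E.indicator (1 : S → ENNReal) (φ u s)) = {u | φ u s ∈ E}.indicator 1 := by
        ext u; simp [Set.indicator]
      rw [e2, lintegral_indicator_one hm, Measure.restrict_apply hm, Set.inter_comm]
      rfl
    simp_rw [e1]
    rw [lintegral_lintegral_swap]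
    · have : ∀ u, ∫⁻ s, E.indicator (1 : S → ENNReal) (φ u s) ∂μ = μ E := fun u => by
        rw [(h.mp u).lintegral_comp (measurable_one.indicator hE), lintegral_indicator_one hE]
      simp [this, mul_comm]
    · exact (((measurable_one.indicator hE).comp h.joint).comp measurable_swap).aemeasurable
  have h2 : ∫⁻ s, (∫⁻ t in closedBall (0 : Fin d → ℝ) ((N : ℝ) + N), f (φ t s)) ∂μ =
      volume (closedBall (0 : Fin d → ℝ) (N + N)) * ∫⁻ s, f s ∂μ := by
    rw [lintegral_lintegral_swap]
    · have : ∀ u, ∫⁻ s, f (φ u s) ∂μ = ∫⁻ s, f s ∂μ := fun u => (h.mp u).lintegral_comp hf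
      simp_rw [this]
      rw [lintegral_const, Measure.restrict_apply_univ, mul_comm]
    · exact (hfj.comp measurable_swap).aemeasurable
  have hNpos : (0 : ℝ) < N := by exact_mod_cast hN
  have h3 := lintegral_mono (μ := μ) key
  have hmv : Measurable fun s => volume {u | u ∈ closedBall (0 : Fin d → ℝ) N ∧ φ u s ∈ E} := by
    exact measurable_measure_prodMk_right
      (s := {p : (Fin d → ℝ) × S | p.1 ∈ closedBall (0 : Fin d → ℝ) N ∧ φ p.1 p.2 ∈ E})
      ((measurable_fst measurableSet_closedBall).inter hmeas2)
  rw [lintegral_const_mul _ hmv, lintegral_const_mul _ hfj.lintegral_prod_left', h1, h2] at h3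
  have hv2 : volume (closedBall (0 : Fin d → ℝ) (N + N)) = 2 ^ d * volume (closedBall (0 : Fin d → ℝ) N) := by
    rw [vol_ball _ (by positivity), vol_ball _ (by positivity),
          show (2 * ((N : ℝ) + N)) ^ d = 2 ^ d * (2 * N) ^ d by rw [← mul_pow]; ring,
          ENNReal.ofReal_mul (by positivity), ENNReal.ofReal_pow (by norm_num)]
    simp
  rw [hv2] at h3
  have hv0 : volume (closedBall (0 : Fin d → ℝ) N) ≠ 0 := by
    rw [vol_ball _ (by positivity)]; exact (ENNReal.ofReal_pos.2 (by positivity)).ne'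
  have hvt : volume (closedBall (0 : Fin d → ℝ) N) ≠ ⊤ := by
    rw [vol_ball _ (by positivity)]; exact ENNReal.ofReal_ne_top
  rw [← ENNReal.mul_le_mul_iff_right hv0 hvt]
  calc _ = lam * (volume (closedBall (0 : Fin d → ℝ) N) * μ E) := by ring
    _ ≤ _ := h3
    _ = _ := by rw [show (10 : ENNReal) = 5 * 2 by norm_num, mul_pow]; ring

lemma Act.maximal (h : Act μ φ) {f : S → ENNReal} (hf : Measurable f) (lam : ENNReal) :
    lam * μ {s | ∃ n : ℕ, 0 < n ∧ lam * volume (closedBall (0 : Fin d → ℝ) n) ≤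
      ∫⁻ t in closedBall (0 : Fin d → ℝ) n, f (φ t s)} ≤ 10 ^ d * ∫⁻ s, f s ∂μ := by
  have e : {s | ∃ n : ℕ, 0 < n ∧ lam * volume (closedBall (0 : Fin d → ℝ) n) ≤
      ∫⁻ t in closedBall (0 : Fin d → ℝ) n, f (φ t s)} = ⋃ N : ℕ,
      {s | ∃ n : ℕ, 0 < n ∧ n ≤ N + 1 ∧ lam * volume (closedBall (0 : Fin d → ℝ) n) ≤
      ∫⁻ t in closedBall (0 : Fin d → ℝ) n, f (φ t s)} := by
    ext s
    simp only [Set.mem_ofPred_eq, Set.mem_iUnion]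
    constructor
    · rintro ⟨n, h1, h2⟩; exact ⟨n, n, h1, by omega, h2⟩
    · rintro ⟨_, n, h1, _, h2⟩; exact ⟨n, h1, h2⟩
  rw [e, Monotone.measure_iUnion, ENNReal.mul_iSup]
  · exact iSup_le fun N => h.maximal_fin hf lam (N + 1) (by omega)
  · rintro a b hab s ⟨n, h1, h2, h3⟩
    exact ⟨n, h1, by omega, h3⟩

end Birk

set_option linter.unusedSectionVars false
namespace Birk
open Metric
variable {S : Type*} [MeasurableSpace S] {μ : Measure S} [IsProbabilityMeasure μ] {d : ℕ}
  {φ : (Fin d → ℝ) → S → S}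

@[reducible] def inv (φ : (Fin d → ℝ) → S → S) : MeasurableSpace S :=
  MeasurableSpace.generateFrom {A : Set S | MeasurableSet A ∧ ∀ t, φ t ⁻¹' A = A}

lemma inv_iff {A : Set S} : MeasurableSet[inv φ] A ↔ MeasurableSet A ∧ ∀ t, φ t ⁻¹' A = A := by
  constructor
  · intro h
    induction A, h using MeasurableSpace.generateFrom_induction with
    | hC t ht _ => exact ht
    | empty => simp
    | compl t _ h => exact ⟨h.1.compl, fun u => by rw [Set.preimage_compl, h.2]⟩
    | iUnion s _ h =>
      exact ⟨MeasurableSet.iUnion fun n => (h n).1, fun u => by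
        rw [Set.preimage_iUnion]; exact Set.iUnion_congr fun n => (h n).2 u⟩
  · exact fun h => MeasurableSpace.measurableSet_generateFrom h

lemma inv_le : inv φ ≤ (inferInstance : MeasurableSpace S) := fun _ hA => (inv_iff.1 hA).1

lemma shift_lim (C a : ℝ) (d : ℕ) : Tendsto (fun T : ℝ => 2 * C * (1 - (1 - a / T) ^ d)) atTop (nhds 0) := by
  have h : Tendsto (fun T : ℝ => a / T) atTop (nhds 0) := tendsto_const_nhds.div_atTop tendsto_id
  have := ((tendsto_const_nhds (x := (1:ℝ))).sub h).pow d
  have := ((tendsto_const_nhds (x := (1:ℝ))).sub this).const_mul (2 * C)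
  simpa using this

lemma shrink_bound {G : (Fin d → ℝ) → ℝ} (hG : Measurable G) {C : ℝ} (hC : ∀ t, |G t| ≤ C)
    (u : Fin d → ℝ) {r T : ℝ} (hr : 0 ≤ r) (h : dist 0 u + r ≤ T) :
    |(∫ t in closedBall u T, G t) - ∫ t in closedBall 0 r, G t| ≤ C * ((2 * T) ^ d - (2 * r) ^ d) := by
  have hsub : closedBall (0 : Fin d → ℝ) r ⊆ closedBall u T := closedBall_subset_closedBall' (by linarith)
  have hT : 0 ≤ T := by have := dist_nonneg (x := (0 : Fin d → ℝ)) (y := u); linarith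
  have hi : IntegrableOn G (closedBall u T) :=
    Measure.integrableOn_of_bounded (M := C) (isCompact_closedBall u T).measure_lt_top.ne
      hG.aestronglyMeasurable (ae_of_all _ hC)
  rw [← setIntegral_sdiff measurableSet_closedBall hi hsub]
  have hfin : volume (closedBall u T \ closedBall 0 r) < ⊤ :=
    (measure_mono Set.sdiff_subset).trans_lt (isCompact_closedBall u T).measure_lt_top
  have := norm_setIntegral_le_of_norm_le_const (f := G) hfin (C := C) (fun x _ => hC x)
  rw [Real.norm_eq_abs] at this
  refine this.trans (le_of_eq ?_)
  rw [measureReal_sdiff hsub measurableSet_closedBall (isCompact_closedBall u T).measure_lt_top.ne, Measure.real, Measure.real, vol_ball _ hT, vol_ball _ hr,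
    ENNReal.toReal_ofReal (by positivity), ENNReal.toReal_ofReal (by positivity)]

lemma Act.shift_bound (h : Act μ φ) {g : S → ℝ} (hg : Measurable g) {C : ℝ} (hC : ∀ s, |g s| ≤ C)
    (u : Fin d → ℝ) (s : S) {T : ℝ} (hT0 : 0 < T) (hT : ‖u‖ ≤ T) :
    |avg φ g T s - avg φ g T (φ u s)| ≤ 2 * C * (1 - (1 - ‖u‖ / T) ^ d) := by
  set G : (Fin d → ℝ) → ℝ := fun t => g (φ t s)
  have hG : Measurable G := (hg.comp h.joint).comp measurable_prodMk_right
  have e : avg φ g T (φ u s) = ((2 * T) ^ d)⁻¹ * ∫ t in closedBall u T, G t := by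
    unfold avg
    rw [ball_shift' G u T]
    simp only [G, h.comp]
  have e' : avg φ g T s = ((2 * T) ^ d)⁻¹ * ∫ t in closedBall 0 T, G t := rfl
  rw [e, e', ← mul_sub, abs_mul, abs_of_nonneg (by positivity)]
  have b1 := shrink_bound hG (fun t => hC _) 0 (r := T - ‖u‖) (T := T) (by linarith) (by simp)
  have b2 := shrink_bound hG (fun t => hC _) u (r := T - ‖u‖) (T := T) (by linarith) (by simp)
  have b3 : |(∫ t in closedBall 0 T, G t) - ∫ t in closedBall u T, G t| ≤
      2 * C * ((2 * T) ^ d - (2 * (T - ‖u‖)) ^ d) := by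
    rw [abs_le] at *
    constructor <;> linarith [b1.1, b1.2, b2.1, b2.2]
  refine (mul_le_mul_of_nonneg_left b3 (by positivity)).trans (le_of_eq ?_)
  have : 2 * (T - ‖u‖) = 2 * T * (1 - ‖u‖ / T) := by field_simp
  rw [this, mul_pow (2 * T)]
  generalize (1 - ‖u‖ / T) ^ d = x
  have : (2 * T) ^ d ≠ 0 := by positivity
  generalize (2 * T) ^ d = y at *
  field_simp

lemma Act.setInt (h : Act μ φ) {g : S → ℝ} (hg : Integrable g μ) (u) {A : Set S} (hA : MeasurableSet A) :
    ∫ s in φ u ⁻¹' A, g (φ u s) ∂μ = ∫ s in A, g s ∂μ := by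
  have := setIntegral_map (μ := μ) (g := φ u) (f := g) hA (by rw [(h.mp u).map_eq]; exact hg.1) (h.meas u).aemeasurable
  rw [← this, (h.mp u).map_eq]

lemma Act.int_comp (h : Act μ φ) {g : S → ℝ} (hg : Integrable g μ) (u) :
    Integrable (fun s => g (φ u s)) μ := (h.mp u).integrable_comp_of_integrable hg

lemma Act.condExp_comp (h : Act μ φ) {g : S → ℝ} (hg : Integrable g μ) (u) :
    μ[fun s => g (φ u s) | inv φ] =ᵐ[μ] μ[g | inv φ] := by
  symm
  refine ae_eq_condExp_of_forall_setIntegral_eq inv_le (h.int_comp hg u)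
    (fun _ _ _ => integrable_condExp.integrableOn) (fun A hA _ => ?_)
    stronglyMeasurable_condExp.aestronglyMeasurable
  rw [setIntegral_condExp inv_le hg hA, ← h.setInt hg u (inv_iff.1 hA).1, (inv_iff.1 hA).2]

lemma Act.avg_int (h : Act μ φ) {f : S → ℝ} (hf : Integrable f μ) (T : ℝ) : Integrable (avg φ f T) μ :=
  ((h.int_prod hf T).integral_prod_right).const_mul _

lemma Act.avg_L1 (h : Act μ φ) {f : S → ℝ} (hf : Integrable f μ) {T : ℝ} (hT : 0 < T) :
    ∫ s, |avg φ f T s| ∂μ ≤ ∫ s, |f s| ∂μ := by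
  have hi := h.int_prod hf.abs T
  have h1 : ∫ s, |avg φ f T s| ∂μ ≤ ∫ s, (((2 * T) ^ d)⁻¹ * ∫ t in closedBall (0 : Fin d → ℝ) T, |f (φ t s)|) ∂μ := by
    refine integral_mono (h.avg_int hf T).abs (h.avg_int hf.abs T) fun s => ?_
    simp only [avg]
    rw [abs_mul, abs_of_nonneg (by positivity : 0 ≤ ((2 * T) ^ d)⁻¹)]
    gcongr
    exact abs_integral_le_integral_abs
  refine h1.trans (le_of_eq ?_)
  rw [integral_const_mul, integral_integral_swap (f := fun s t => |f (φ t s)|) hi.swap]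
  have h2 : ∀ u, ∫ s, |f (φ u s)| ∂μ = ∫ s, |f s| ∂μ := fun u => by
    have := h.setInt hf.abs u MeasurableSet.univ
    simpa using this
  simp_rw [h2]
  rw [setIntegral_const, Measure.real, vol_ball _ hT.le, ENNReal.toReal_ofReal (by positivity), smul_eq_mul]
  field_simp

lemma Act.maximal_real (h : Act μ φ) {k : S → ℝ} (hk : Integrable k μ) {lam : ℝ} (hl : 0 < lam) :
    ENNReal.ofReal lam * μ {s | ∃ T, 1 ≤ T ∧ lam < |avg φ k T s|} ≤ 20 ^ d * ∫⁻ s, ‖k s‖ₑ ∂μ := by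
  wlog hm : Measurable k generalizing k
  · have hmm := hk.1.stronglyMeasurable_mk.measurable
    have := this (hk.congr hk.1.ae_eq_mk) hmm
    have he : ∫⁻ s, ‖k s‖ₑ ∂μ = ∫⁻ s, ‖hk.1.mk k s‖ₑ ∂μ := lintegral_congr_ae (hk.1.ae_eq_mk.fun_comp enorm)
    rw [he]
    refine le_trans ?_ this
    gcongr 1
    apply measure_mono_ae
    filter_upwards [h.avg_congr hk.1.ae_eq_mk] with s hs hh
    obtain ⟨T, h1, h2⟩ := hh
    exact ⟨T, h1, by rwa [← hs T]⟩
  have h1 := h.maximal hm.enorm (ENNReal.ofReal (lam / 2 ^ d))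
  have h2 : {s | ∃ T, 1 ≤ T ∧ lam < |avg φ k T s|} ⊆ {s | ∃ n : ℕ, 0 < n ∧
      ENNReal.ofReal (lam / 2 ^ d) * volume (closedBall (0 : Fin d → ℝ) n) ≤
      ∫⁻ t in closedBall (0 : Fin d → ℝ) n, ‖k (φ t s)‖ₑ} := by
    rintro s ⟨T, hT, hs⟩
    refine ⟨⌈T⌉₊, Nat.ceil_pos.2 (by linarith), ?_⟩
    have hn := Nat.ceil_lt_add_one (show 0 ≤ T by linarith)
    have hn' := Nat.le_ceil T
    have a1 : ENNReal.ofReal |∫ t in closedBall (0 : Fin d → ℝ) T, k (φ t s)| ≤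
        ∫⁻ t in closedBall (0 : Fin d → ℝ) ⌈T⌉₊, ‖k (φ t s)‖ₑ := by
      rw [← Real.enorm_eq_ofReal_abs]
      exact (enorm_integral_le_lintegral_enorm _).trans
        (lintegral_mono_set (closedBall_subset_closedBall hn'))
    refine le_trans ?_ a1
    rw [vol_ball _ (by positivity), ← ENNReal.ofReal_mul (by positivity)]
    apply ENNReal.ofReal_le_ofReal
    unfold avg at hs
    have hTp : 0 < (2 * T) ^ d := by positivity
    rw [abs_mul, abs_of_nonneg (by positivity : 0 ≤ ((2 * T) ^ d)⁻¹), inv_mul_eq_div, lt_div_iff₀ hTp] at hs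
    refine le_trans ?_ hs.le
    rw [div_mul_eq_mul_div, mul_div_assoc, ← div_pow]
    gcongr
    linarith
  have h3 : ENNReal.ofReal lam = 2 ^ d * ENNReal.ofReal (lam / 2 ^ d) := by
    rw [← ENNReal.ofReal_ofNat 2, ← ENNReal.ofReal_pow (by norm_num), ← ENNReal.ofReal_mul (by positivity)]
    congr 1; field_simp
  calc _ ≤ 2 ^ d * (ENNReal.ofReal (lam / 2 ^ d) * μ {s | ∃ n : ℕ, 0 < n ∧
      ENNReal.ofReal (lam / 2 ^ d) * volume (closedBall (0 : Fin d → ℝ) n) ≤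
      ∫⁻ t in closedBall (0 : Fin d → ℝ) n, ‖k (φ t s)‖ₑ}) := by
        rw [h3, mul_assoc]; gcongr
    _ ≤ 2 ^ d * (10 ^ d * ∫⁻ s, ‖k s‖ₑ ∂μ) := by gcongr
    _ = _ := by rw [← mul_assoc, ← mul_pow]; norm_num

end Birk

set_option linter.unusedSectionVars false
namespace Birk
open Metric
variable {S : Type*} [MeasurableSpace S] {μ : Measure S} [IsProbabilityMeasure μ] {d : ℕ}
  {φ : (Fin d → ℝ) → S → S}

def Good (μ : Measure S) (φ : (Fin d → ℝ) → S → S) (f : S → ℝ) : Prop :=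
  (∀ᵐ s ∂μ, Tendsto (fun T : ℝ => avg φ f T s) atTop (nhds ((μ[f | inv φ]) s))) ∧
  Tendsto (fun T : ℝ => ∫ s, |avg φ f T s - (μ[f | inv φ]) s| ∂μ) atTop (nhds 0)

lemma Act.good_congr (h : Act μ φ) {f g : S → ℝ} (hfg : f =ᵐ[μ] g) (hf : Good μ φ f) : Good μ φ g := by
  have h1 := h.avg_congr hfg
  have h2 : μ[f | inv φ] =ᵐ[μ] μ[g | inv φ] := condExp_congr_ae hfg
  constructor
  · filter_upwards [h1, h2, hf.1] with s a b c
    rw [← b]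
    simpa only [a] using c
  · refine hf.2.congr fun T => integral_congr_ae ?_
    filter_upwards [h1, h2] with s a b
    rw [a, b]

lemma Act.avg_sub (h : Act μ φ) {f g : S → ℝ} (hf : Integrable f μ) (hg : Integrable g μ) :
    ∀ᵐ s ∂μ, ∀ T, avg φ (f - g) T s = avg φ f T s - avg φ g T s := by
  filter_upwards [h.ae_int hf, h.ae_int hg] with s a b T
  simp only [avg, Pi.sub_apply]
  rw [integral_sub (a T) (b T), mul_sub]

lemma Act.good_smul (h : Act μ φ) {f : S → ℝ} (c : ℝ) (hf : Good μ φ f) : Good μ φ (c • f) := by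
  have h1 : ∀ T s, avg φ (c • f) T s = c * avg φ f T s := fun T s => by
    simp only [avg, Pi.smul_apply, smul_eq_mul]
    rw [integral_const_mul]; ring
  have h2 : μ[c • f | inv φ] =ᵐ[μ] c • μ[f | inv φ] := condExp_smul c f _
  constructor
  · filter_upwards [h2, hf.1] with s b a
    rw [b]; simp only [h1, Pi.smul_apply, smul_eq_mul]
    exact a.const_mul c
  · have := hf.2.const_mul |c|
    rw [mul_zero] at this
    refine this.congr fun T => ?_
    rw [← integral_const_mul]
    refine integral_congr_ae ?_
    filter_upwards [h2] with s b
    rw [b, h1, Pi.smul_apply, smul_eq_mul, ← mul_sub, abs_mul]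

lemma Act.good_add (h : Act μ φ) {f g : S → ℝ} (hfi : Integrable f μ) (hgi : Integrable g μ)
    (hf : Good μ φ f) (hg : Good μ φ g) : Good μ φ (f + g) := by
  have h1 : ∀ᵐ s ∂μ, ∀ T, avg φ (f + g) T s = avg φ f T s + avg φ g T s := by
    filter_upwards [h.ae_int hfi, h.ae_int hgi] with s a b T
    simp only [avg, Pi.add_apply]
    rw [integral_add (a T) (b T), mul_add]
  have h2 : μ[f + g | inv φ] =ᵐ[μ] μ[f | inv φ] + μ[g | inv φ] := condExp_add hfi hgi _
  constructor
  · filter_upwards [h1, h2, hf.1, hg.1] with s a b c e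
    rw [b]; simp only [a, Pi.add_apply]
    exact c.add e
  · have := hf.2.add hg.2
    rw [add_zero] at this
    refine squeeze_zero (fun T => integral_nonneg fun s => abs_nonneg _) (fun T => ?_) this
    have e := integral_add ((h.avg_int hfi T).sub (integrable_condExp (f := f) (m := inv φ))).abs
      ((h.avg_int hgi T).sub (integrable_condExp (f := g) (m := inv φ))).abs
    simp only [Pi.sub_apply] at e
    rw [← e]
    refine integral_mono_ae ((h.avg_int (hfi.add hgi) T).sub integrable_condExp).abs
      (((h.avg_int hfi T).sub integrable_condExp).abs.add
      ((h.avg_int hgi T).sub integrable_condExp).abs) ?_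
    filter_upwards [h1, h2] with s a b
    rw [a, b, Pi.add_apply]
    refine le_trans (le_of_eq ?_) (abs_add_le _ _)
    congr 1; ring

lemma Act.good_cob (h : Act μ φ) {g : S → ℝ} (hg : Measurable g) {C : ℝ} (hC : ∀ s, |g s| ≤ C)
    (u : Fin d → ℝ) : Good μ φ (g - fun s => g (φ u s)) := by
  have hgi : Integrable g μ := Integrable.of_bound hg.aestronglyMeasurable C (ae_of_all _ hC)
  have h1 := h.avg_sub hgi (h.int_comp hgi u)
  have h2 : μ[g - (fun s => g (φ u s)) | inv φ] =ᵐ[μ] 0 := by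
    filter_upwards [condExp_sub hgi (h.int_comp hgi u) (inv φ), h.condExp_comp hgi u] with s a b
    rw [a, Pi.sub_apply, b]; simp
  have h3 : ∀ T s, avg φ (fun s => g (φ u s)) T s = avg φ g T (φ u s) := fun T s => by
    simp only [avg, ← h.comp]; simp only [add_comm]
  have h4 : ∀ᵐ s ∂μ, ∀ T, 0 < T → ‖u‖ ≤ T → |avg φ (g - fun s => g (φ u s)) T s -
      (μ[g - (fun s => g (φ u s)) | inv φ]) s| ≤ 2 * C * (1 - (1 - ‖u‖ / T) ^ d) := by
    filter_upwards [h1, h2] with s a b T hT hu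
    rw [a, b, h3, Pi.zero_apply, sub_zero]
    exact h.shift_bound hg hC u s hT hu
  constructor
  · filter_upwards [h4] with s hs
    rw [tendsto_iff_norm_sub_tendsto_zero]
    refine squeeze_zero' (Eventually.of_forall fun T => norm_nonneg _) ?_ (shift_lim C ‖u‖ d)
    filter_upwards [eventually_gt_atTop 0, eventually_ge_atTop ‖u‖] with T a b
    exact hs T a b
  · refine squeeze_zero' (Eventually.of_forall fun T => integral_nonneg fun s => abs_nonneg _) ?_ (shift_lim C ‖u‖ d)
    filter_upwards [eventually_gt_atTop 0, eventually_ge_atTop ‖u‖] with T a b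
    have : ∫ s, 2 * C * (1 - (1 - ‖u‖ / T) ^ d) ∂μ = 2 * C * (1 - (1 - ‖u‖ / T) ^ d) := by simp
    rw [← this]
    refine integral_mono_ae ((h.avg_int (hgi.sub (h.int_comp hgi u)) T).sub integrable_condExp).abs
      (integrable_const _) ?_
    filter_upwards [h4] with s hs
    exact hs T a b

lemma avg_of_const (f : S → ℝ) (s : S) (hs : ∀ᵐ t : Fin d → ℝ, f (φ t s) = f s) {T : ℝ} (hT : 0 < T) :
    avg φ f T s = f s := by
  unfold avg
  rw [integral_congr_ae (g := fun _ => f s) (ae_restrict_of_ae hs), setIntegral_const, Measure.real,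
    vol_ball _ hT.le, ENNReal.toReal_ofReal (by positivity), smul_eq_mul]
  field_simp

lemma Act.good_inv (h : Act μ φ) {f : S → ℝ} (hf : Measurable[inv φ] f) (hfi : Integrable f μ) :
    Good μ φ f := by
  have h1 : ∀ t s, f (φ t s) = f s := fun t s => by
    have := (inv_iff.1 (hf (measurableSet_singleton (f s)))).2 t
    have h2 : s ∈ φ t ⁻¹' (f ⁻¹' {f s}) := by rw [this]; rfl
    exact h2
  have h2 : μ[f | inv φ] = f := condExp_of_stronglyMeasurable inv_le hf.stronglyMeasurable hfi
  have h3 : ∀ s T, 0 < T → avg φ f T s = f s := fun s T hT =>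
    avg_of_const f s (ae_of_all _ fun t => h1 t s) hT
  unfold Good
  rw [h2]
  constructor
  · refine ae_of_all _ fun s => tendsto_const_nhds.congr' ?_
    filter_upwards [eventually_gt_atTop 0] with T hT
    exact (h3 s T hT).symm
  · refine tendsto_const_nhds.congr' ?_
    filter_upwards [eventually_gt_atTop 0] with T hT
    simp [h3 _ T hT]

lemma Act.good_close (h : Act μ φ) {f : S → ℝ} (hf : Integrable f μ)
    (H : ∀ ε : ENNReal, ε ≠ 0 → ∃ g, Integrable g μ ∧ Good μ φ g ∧ eLpNorm (f - g) 1 μ ≤ ε) :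
    Good μ φ f := by
  have hsub : ∀ g, Integrable g μ → μ[f | inv φ] =ᵐ[μ] μ[g | inv φ] + μ[f - g | inv φ] := by
    intro g hg
    filter_upwards [condExp_sub hf hg (inv φ)] with s hs
    rw [Pi.add_apply, hs, Pi.sub_apply]; ring
  constructor
  · have key : ∀ lam : ℝ, 0 < lam → ∀ᵐ s ∂μ, ∀ᶠ T in atTop, |avg φ f T s - (μ[f | inv φ]) s| ≤ 3 * lam := by
      intro lam hl
      rw [ae_iff]
      set X := {s | ¬ ∀ᶠ T in atTop, |avg φ f T s - (μ[f | inv φ]) s| ≤ 3 * lam}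
      have hc : (20 ^ d + 1 : ENNReal) ≠ ⊤ := by finiteness
      have hX : ENNReal.ofReal lam * μ X ≤ 0 := by
        refine le_of_forall_gt_imp_ge_of_dense fun δ hδ => ?_
        obtain ⟨g, hgi, hg, hfg⟩ := H (δ / (20 ^ d + 1)) (ENNReal.div_ne_zero.2 ⟨hδ.ne', hc⟩)
        have m1 := h.maximal_real (hf.sub hgi) hl
        rw [eLpNorm_one_eq_lintegral_enorm] at hfg
        have m2 : ENNReal.ofReal lam * μ {s | ENNReal.ofReal lam ≤ ‖(μ[f - g | inv φ]) s‖ₑ} ≤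
            ∫⁻ s, ‖(f - g) s‖ₑ ∂μ := by
          refine (mul_meas_ge_le_lintegral₀ integrable_condExp.1.enorm _).trans ?_
          have := eLpNorm_condExp_le_eLpNorm (μ := μ) (m := inv φ) (f - g) (p := 1) le_rfl
          simpa only [eLpNorm_one_eq_lintegral_enorm] using this
        have hXs : μ X ≤ μ ({s | ∃ T, 1 ≤ T ∧ lam < |avg φ (f - g) T s|} ∪
            {s | ENNReal.ofReal lam ≤ ‖(μ[f - g | inv φ]) s‖ₑ}) := by
          apply measure_mono_ae
          filter_upwards [h.avg_sub hf hgi, hsub g hgi, hg.1] with s a b c hs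
          by_contra hcon
          have hcon1 : ∀ T, 1 ≤ T → |avg φ (f - g) T s| ≤ lam := by
            intro T hT
            by_contra h'
            exact hcon (Or.inl ⟨T, hT, not_le.1 h'⟩)
          have hcon2 : |(μ[f - g | inv φ]) s| ≤ lam := by
            by_contra h'
            refine hcon (Or.inr ?_)
            change ENNReal.ofReal lam ≤ ‖(μ[f - g | inv φ]) s‖ₑ
            rw [Real.enorm_eq_ofReal_abs]
            exact ENNReal.ofReal_le_ofReal (not_le.1 h').le
          apply hs
          have hd := (tendsto_iff_norm_sub_tendsto_zero.1 c).eventually_le_const hl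
          filter_upwards [hd, eventually_ge_atTop 1] with T hT1 hT2
          have := hcon1 T hT2
          rw [a] at this
          rw [b, Pi.add_apply]
          rw [Real.norm_eq_abs] at hT1
          rw [abs_le] at *
          constructor <;> linarith [this.1, this.2, hT1.1, hT1.2, hcon2.1, hcon2.2]
        calc ENNReal.ofReal lam * μ X ≤ ENNReal.ofReal lam * (μ {s | ∃ T, 1 ≤ T ∧ lam < |avg φ (f - g) T s|} +
            μ {s | ENNReal.ofReal lam ≤ ‖(μ[f - g | inv φ]) s‖ₑ}) := by
              gcongr; exact hXs.trans (measure_union_le _ _)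
          _ ≤ 20 ^ d * ∫⁻ s, ‖(f - g) s‖ₑ ∂μ + ∫⁻ s, ‖(f - g) s‖ₑ ∂μ := by
              rw [mul_add]; exact add_le_add m1 m2
          _ = (20 ^ d + 1) * ∫⁻ s, ‖(f - g) s‖ₑ ∂μ := by ring
          _ ≤ (20 ^ d + 1) * (δ / (20 ^ d + 1)) := by gcongr
          _ ≤ δ := ENNReal.mul_div_le
      have := (nonpos_iff_eq_zero.1 hX)
      rcases mul_eq_zero.1 this with h0 | h0
      · exact absurd h0 (ENNReal.ofReal_pos.2 hl).ne'
      · exact h0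
    have : ∀ n : ℕ, ∀ᵐ s ∂μ, ∀ᶠ T in atTop, |avg φ f T s - (μ[f | inv φ]) s| ≤ 3 * (1 / ((n : ℝ) + 1)) :=
      fun n => key _ (by positivity)
    filter_upwards [ae_all_iff.2 this] with s hs
    rw [Metric.tendsto_nhds]
    intro ε hε
    obtain ⟨n, hn⟩ := exists_nat_one_div_lt (show 0 < ε / 3 by positivity)
    filter_upwards [hs n] with T hT
    rw [Real.dist_eq]
    linarith
  · rw [Metric.tendsto_nhds]
    intro ε hε
    obtain ⟨g, hgi, hg, hfg⟩ := H (ENNReal.ofReal (ε / 4)) (ENNReal.ofReal_pos.2 (by positivity)).ne'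
    have hfg' : ∫ s, |(f - g) s| ∂μ ≤ ε / 4 := by
      have e := integral_norm_eq_lintegral_enorm (hf.sub hgi).1
      simp only [Real.norm_eq_abs] at e
      rw [e, ← eLpNorm_one_eq_lintegral_enorm]
      exact ENNReal.toReal_le_of_le_ofReal (by positivity) hfg
    have hE := integral_abs_condExp_le (μ := μ) (m := inv φ) (f - g)
    filter_upwards [hg.2.eventually_lt_const (show 0 < ε / 4 by positivity), eventually_gt_atTop 0] with T hT hT0
    have hA := h.avg_L1 (hf.sub hgi) hT0
    rw [Real.dist_eq, sub_zero, abs_of_nonneg (integral_nonneg fun s => abs_nonneg _)]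
    have i1 := ((h.avg_int hgi T).sub (integrable_condExp (f := g) (m := inv φ))).abs
    have i2 := (h.avg_int (hf.sub hgi) T).abs
    have i3 := (integrable_condExp (μ := μ) (f := f - g) (m := inv φ)).abs
    have : ∫ s, |avg φ f T s - (μ[f | inv φ]) s| ∂μ ≤
        ∫ s, (|avg φ g T s - (μ[g | inv φ]) s| + |avg φ (f - g) T s| + |(μ[f - g | inv φ]) s|) ∂μ := by
      refine integral_mono_ae ((h.avg_int hf T).sub integrable_condExp).abs ((i1.add i2).add i3) ?_
      filter_upwards [h.avg_sub hf hgi, hsub g hgi] with s a b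
      rw [a, b, Pi.add_apply]
      set z := (μ[f - g | inv φ]) s
      refine le_trans (le_of_eq ?_) ((abs_sub _ z).trans (add_le_add_left (abs_add_le _ _) _))
      congr 1; ring
    have e2 : ∫ s, (|avg φ g T s - (μ[g | inv φ]) s| + |avg φ (f - g) T s| + |(μ[f - g | inv φ]) s|) ∂μ
      = ∫ s, |avg φ g T s - (μ[g | inv φ]) s| ∂μ + ∫ s, |avg φ (f - g) T s| ∂μ + ∫ s, |(μ[f - g | inv φ]) s| ∂μ := by
      rw [integral_add, integral_add]
      · exact i1
      · exact i2
      · exact i1.add i2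
      · exact i3
    linarith

end Birk

set_option linter.unusedSectionVars false
namespace Birk
open Metric
variable {S : Type*} [MeasurableSpace S] {μ : Measure S} [IsProbabilityMeasure μ] {d : ℕ}
  {φ : (Fin d → ℝ) → S → S}

lemma Act.ae_inv_bdd (h : Act μ φ) {b : S → ℝ} (hb : Measurable b) {C : ℝ} (hC : ∀ s, |b s| ≤ C)
    (hinv : ∀ u, (fun s => b (φ u s)) =ᵐ[μ] b) : ∃ b', Measurable[inv φ] b' ∧ b =ᵐ[μ] b' := by
  have hm : ∀ n : ℕ, StronglyMeasurable (avg φ b n) := fun n => by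
    have : StronglyMeasurable fun p : (Fin d → ℝ) × S => b (φ p.1 p.2) :=
      (hb.comp h.joint).stronglyMeasurable
    exact (this.integral_prod_left' (μ := volume.restrict (closedBall 0 (n : ℝ)))).const_mul _
  refine ⟨fun s => limUnder atTop (fun n : ℕ => avg φ b n s), ?_, ?_⟩
  · have hmeas : Measurable fun s => limUnder atTop (fun n : ℕ => avg φ b n s) :=
      (StronglyMeasurable.limUnder hm).measurable
    have hI : ∀ u s, limUnder atTop (fun n : ℕ => avg φ b n (φ u s)) = limUnder atTop (fun n : ℕ => avg φ b n s) := by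
      intro u s
      have h0 : Tendsto (fun n : ℕ => avg φ b n s - avg φ b n (φ u s)) atTop (nhds 0) := by
        rw [tendsto_zero_iff_abs_tendsto_zero]
        refine squeeze_zero' (Eventually.of_forall fun T => abs_nonneg _) ?_
          ((shift_lim C ‖u‖ d).comp tendsto_natCast_atTop_atTop)
        have e1 := tendsto_natCast_atTop_atTop (R := ℝ) |>.eventually_gt_atTop 0
        have e2 := tendsto_natCast_atTop_atTop (R := ℝ) |>.eventually_ge_atTop ‖u‖
        filter_upwards [e1, e2] with n h1 h2
        exact h.shift_bound hb hC u s h1 h2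
      have : ∀ l, Tendsto (fun n : ℕ => avg φ b n (φ u s)) atTop (nhds l) ↔
          Tendsto (fun n : ℕ => avg φ b n s) atTop (nhds l) := fun l =>
        ⟨fun hh => by simpa using hh.add h0, fun hh => by simpa using hh.sub h0⟩
      unfold limUnder lim
      congr 1
      ext l
      exact this l
    intro B hB
    refine inv_iff.2 ⟨hmeas hB, fun t => ?_⟩
    ext s
    simp only [Set.mem_preimage, hI]
  · have h1 : ∀ᵐ s ∂μ, ∀ᵐ t : Fin d → ℝ, b (φ t s) = b s := by
      have hms : MeasurableSet {x : (Fin d → ℝ) × S | b (φ x.1 x.2) = b x.2} :=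
        measurableSet_eq_fun (hb.comp h.joint) (hb.comp measurable_snd)
      exact (Measure.ae_ae_comm (p := fun t s => b (φ t s) = b s) hms).1 (ae_of_all _ hinv)
    filter_upwards [h1] with s hs
    symm
    apply Tendsto.limUnder_eq
    refine tendsto_const_nhds.congr' ?_
    filter_upwards [eventually_gt_atTop 0] with n hn
    exact (avg_of_const b s hs (by exact_mod_cast hn)).symm

lemma Act.ae_inv (h : Act μ φ) {z : S → ℝ} (hz : Measurable z)
    (hinv : ∀ u, (fun s => z (φ u s)) =ᵐ[μ] z) : ∃ b', Measurable[inv φ] b' ∧ z =ᵐ[μ] b' := by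
  obtain ⟨b, hb, hzb⟩ := h.ae_inv_bdd (b := fun s => Real.arctan (z s)) (Real.measurable_arctan.comp hz)
    (C := Real.pi / 2) (fun s => (abs_lt.2 ⟨Real.neg_pi_div_two_lt_arctan _, Real.arctan_lt_pi_div_two _⟩).le)
    (fun u => by filter_upwards [hinv u] with s hs; rw [hs])
  have htan : Measurable Real.tan := by
    have : Real.tan = fun x => Real.sin x / Real.cos x := funext Real.tan_eq_sin_div_cos
    rw [this]; exact Real.measurable_sin.div Real.measurable_cos
  refine ⟨fun s => Real.tan (b s), htan.comp hb, ?_⟩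
  filter_upwards [hzb] with s hs
  rw [← hs, Real.tan_arctan]

lemma Act.good_L2 (h : Act μ φ) (x : Lp ℝ 2 μ) : Good μ φ x := by
  have hint : ∀ x : Lp ℝ 2 μ, Integrable x μ := fun x => (Lp.memLp x).integrable (by norm_num)
  let gens : Set (Lp ℝ 2 μ) := {x | ∃ (A : Set S) (hA : MeasurableSet A) (u : Fin d → ℝ),
    x = indicatorConstLp 2 hA (measure_ne_top μ A) (1 : ℝ) -
      indicatorConstLp 2 (h.meas u hA) (measure_ne_top μ _) (1 : ℝ)}
  let K : Submodule ℝ (Lp ℝ 2 μ) := (Submodule.span ℝ gens).topologicalClosure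
  have hspan : ∀ y ∈ Submodule.span ℝ gens, Good μ φ y := by
    intro y hy
    induction hy using Submodule.span_induction with
    | mem y hy =>
      obtain ⟨A, hA, u, rfl⟩ := hy
      refine h.good_congr ?_ (h.good_cob (g := A.indicator fun _ => (1 : ℝ)) (measurable_const.indicator hA)
        (C := 1) (fun s => ?_) u)
      · filter_upwards [Lp.coeFn_sub (indicatorConstLp 2 hA (measure_ne_top μ A) (1 : ℝ))
          (indicatorConstLp 2 (h.meas u hA) (measure_ne_top μ _) (1 : ℝ)),
          indicatorConstLp_coeFn (p := 2) (hs := hA) (hμs := measure_ne_top μ A) (c := (1 : ℝ)),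
          indicatorConstLp_coeFn (p := 2) (hs := h.meas u hA) (hμs := measure_ne_top μ _) (c := (1 : ℝ))]
          with s a b c
        refine Eq.trans ?_ a.symm
        refine Eq.trans ?_ (congrArg₂ (· - ·) b c).symm
        rfl
      · by_cases hs : s ∈ A <;> simp [hs]
    | zero =>
      refine h.good_congr (Lp.coeFn_zero ℝ 2 μ).symm ?_
      exact h.good_inv (f := fun _ => 0) measurable_const (integrable_const _)
    | add y z _ _ hy hz =>
      exact h.good_congr (Lp.coeFn_add y z).symm (h.good_add (hint y) (hint z) hy hz)
    | smul c y _ hy =>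
      exact h.good_congr (Lp.coeFn_smul c y).symm (h.good_smul c hy)
  have hK : ∀ y ∈ K, Good μ φ y := by
    intro y hy
    refine h.good_close (hint y) fun ε hε => ?_
    have hy' : y ∈ closure (Submodule.span ℝ gens : Set (Lp ℝ 2 μ)) := hy
    obtain ⟨w, hw, hyw⟩ := EMetric.mem_closure_iff.1 hy' ε (pos_iff_ne_zero.2 hε)
    refine ⟨w, hint w, hspan w hw, ?_⟩
    rw [Lp.edist_def] at hyw
    exact (eLpNorm_le_eLpNorm_of_exponent_le (by norm_num) ((hint y).sub (hint w)).1).trans hyw.le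
  have hKo : ∀ z ∈ Kᗮ, Good μ φ z := by
    intro z hz
    have h1 : ∀ u, ∀ A, MeasurableSet A → ∫ s in A, z s ∂μ = ∫ s in φ u ⁻¹' A, z s ∂μ := by
      intro u A hA
      have hg := Submodule.le_topologicalClosure (Submodule.span ℝ gens) (Submodule.subset_span (s := gens) ⟨A, hA, u, rfl⟩)
      have := (Submodule.mem_orthogonal K z).1 hz _ hg
      rw [inner_sub_left, L2.inner_indicatorConstLp_one, L2.inner_indicatorConstLp_one] at this
      linarith
    have h2 : ∀ u, (fun s => z (φ u s)) =ᵐ[μ] z := by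
      intro u
      refine Integrable.ae_eq_of_forall_setIntegral_eq _ _ (h.int_comp (hint z) u) (hint z) fun A hA _ => ?_
      have e : A = φ u ⁻¹' (φ (-u) ⁻¹' A) := by
        ext s; simp [← h.comp, h.id0]
      rw [e, h.setInt (hint z) u (h.meas _ hA), h1 u _ (h.meas _ hA)]
    obtain ⟨b, hb, hzb⟩ := h.ae_inv (Lp.stronglyMeasurable z).measurable h2
    exact h.good_congr hzb.symm (h.good_inv hb ((hint z).congr hzb))
  have : CompleteSpace K := (Submodule.isClosed_topologicalClosure _).completeSpace_coe
  obtain ⟨y, hy, z, hz, rfl⟩ := K.exists_add_mem_mem_orthogonal x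
  exact h.good_congr (Lp.coeFn_add y z).symm (h.good_add (hint y) (hint z) (hK y hy) (hKo z hz))

lemma Act.good (h : Act μ φ) {f : S → ℝ} (hf : Integrable f μ) : Good μ φ f := by
  refine h.good_close hf fun ε hε => ?_
  obtain ⟨g, hg, hgm⟩ := (memLp_one_iff_integrable.2 hf).exists_simpleFunc_eLpNorm_sub_lt (by simp) hε
  have hg2 : MemLp g 2 μ := g.memLp_of_isFiniteMeasure 2 μ
  exact ⟨g, memLp_one_iff_integrable.1 hgm, h.good_congr hg2.coeFn_toLp (h.good_L2 (hg2.toLp g)), hg.le⟩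

end Birk


/-- Multiparameter Birkhoff theorem, continuous case: for a jointly measurable
measure-preserving `ℝ^d`-action `{φ_t}` on a probability space `(S,μ)` and `f₀ ∈ L¹(μ)`, the
averages `A_T f = (2T)^{-d} ∫_{(−T,T]^d} f₀(φ_t(·)) dt` converge `μ`-a.e. and in `L¹` to the
conditional expectation of `f₀` given the σ-algebra `𝓘` of invariant measurable sets. -/
theorem stmt9 {S : Type*} [MeasurableSpace S]
    (μ : Measure S) [IsProbabilityMeasure μ] (d : ℕ)
    (φ : (Fin d → ℝ) → S → S)
    (hφjoint : Measurable fun p : (Fin d → ℝ) × S => φ p.1 p.2)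
    (hid : ∀ s, φ 0 s = s)
    (hcomp : ∀ u v s, φ (u + v) s = φ u (φ v s))
    (hpres : ∀ t, ∀ A : Set S, MeasurableSet A → μ (φ t ⁻¹' A) = μ A) :
    ∀ f₀ : S → ℝ, Integrable f₀ μ →
      (∀ᵐ s ∂μ, Tendsto (fun T : ℝ =>
          ((2 * T) ^ d)⁻¹ *
            ∫ t in Set.univ.pi fun _ : Fin d => Set.Ioc (-T) T, f₀ (φ t s))
        atTop
        (nhds ((μ[f₀|MeasurableSpace.generateFrom
          {A : Set S | MeasurableSet A ∧ ∀ t, φ t ⁻¹' A = A}]) s))) ∧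
      Tendsto (fun T : ℝ =>
          ∫ s, |(((2 * T) ^ d)⁻¹ *
            ∫ t in Set.univ.pi fun _ : Fin d => Set.Ioc (-T) T, f₀ (φ t s)) -
            (μ[f₀|MeasurableSpace.generateFrom
              {A : Set S | MeasurableSet A ∧ ∀ t, φ t ⁻¹' A = A}]) s| ∂μ)
        atTop (nhds 0) := by
  intro f₀ hf
  have h : Birk.Act μ φ := ⟨hφjoint, hid, hcomp, hpres⟩
  have hg := h.good hf
  constructor
  · filter_upwards [hg.1] with s hs
    refine hs.congr' ?_
    filter_upwards [eventually_ge_atTop 0] with T hT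
    exact (Birk.avg_eq φ f₀ hT s).symm
  · refine hg.2.congr' ?_
    filter_upwards [eventually_ge_atTop 0] with T hT
    simp only [Birk.avg_eq φ f₀ hT]
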